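/- The polynomial p_{d+1} equals ∏_{i=0}^d (λ − θ_{t+i}) and is both the minimal polynomial and the characteristic polynomial of the restriction of A to W; dually, p*_{d+1} equals ∏_{i=0}^d (λ − θ*_{r+i}) and is both the minimal polynomial and the characteristic polynomial of the restriction of A* to W. -/

import Mathlib

open Matrix
open scoped Classical

noncomputable section

/-- The full setup: a `Q`-polynomial distance-regular graph `Γ = (X,R)` of diameter `D ≥ 3`,
with adjacency matrix `A`, primitive idempotents `E_i`, eigenvalues `θ_i`,
Krein parameters `q^h_{ij}`, a fixed base vertex `x`, dual primitive idempotents `E*_i`,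
dual adjacency matrix `A*` and dual eigenvalues `θ*_i`. -/
structure TSetup (X : Type*) [Fintype X] [DecidableEq X] where
  G : SimpleGraph X
  hGconn : G.Connected
  D : ℕ
  hD3 : 3 ≤ D
  hDiamLe : ∀ y z : X, G.dist y z ≤ D
  hDiamEq : ∃ y z : X, G.dist y z = D
  p : ℕ → ℕ → ℕ → ℕ
  hDRG : ∀ h i j : ℕ, h ≤ D → i ≤ D → j ≤ D → ∀ y z : X, G.dist y z = h →
    Nat.card {w : X // G.dist y w = i ∧ G.dist z w = j} = p h i j
  A : Matrix X X ℂ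
  hA : ∀ y z : X, A y z = if G.Adj y z then 1 else 0
  E : ℕ → Matrix X X ℂ
  hEzero : ∀ i : ℕ, D < i → E i = 0
  hEsum : ∑ i ∈ Finset.range (D + 1), E i = 1
  hEidem : ∀ i j : ℕ, i ≤ D → j ≤ D → E i * E j = if i = j then E i else 0
  hEsymm : ∀ i : ℕ, (E i)ᵀ = E i
  hEreal : ∀ i : ℕ, (E i).map (starRingEnd ℂ) = E i
  hE0 : E 0 = (Fintype.card X : ℂ)⁻¹ • Matrix.of (fun _ _ => (1 : ℂ))
  θ : ℕ → ℝ
  hθinj : ∀ i j : ℕ, i ≤ D → j ≤ D → θ i = θ j → i = j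
  hAspec : A = ∑ i ∈ Finset.range (D + 1), (θ i : ℂ) • E i
  q : ℕ → ℕ → ℕ → ℝ
  hKrein : ∀ i j : ℕ, i ≤ D → j ≤ D →
    Matrix.hadamard (E i) (E j) =
      (Fintype.card X : ℂ)⁻¹ • ∑ h ∈ Finset.range (D + 1), (q h i j : ℂ) • E h
  hQpoly0 : ∀ h i j : ℕ, h ≤ D → i ≤ D → j ≤ D →
    (i + j < h ∨ h + j < i ∨ h + i < j) → q h i j = 0
  hQpoly1 : ∀ h i j : ℕ, h ≤ D → i ≤ D → j ≤ D →
    (h = i + j ∨ i = h + j ∨ j = h + i) → q h i j ≠ 0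
  x : X
  Estar : ℕ → Matrix X X ℂ
  hEstarzero : ∀ i : ℕ, D < i → Estar i = 0
  hEstar : ∀ i : ℕ, i ≤ D → ∀ y z : X,
    Estar i y z = if y = z ∧ G.dist x y = i then 1 else 0
  Astar : Matrix X X ℂ
  hAstar : ∀ y z : X, Astar y z = if y = z then (Fintype.card X : ℂ) * E 1 x y else 0
  θstar : ℕ → ℝ
  hθstarinj : ∀ i j : ℕ, i ≤ D → j ≤ D → θstar i = θstar j → i = j
  hAstarspec : Astar = ∑ i ∈ Finset.range (D + 1), (θstar i : ℂ) • Estar i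

variable {X : Type*} [Fintype X] [DecidableEq X]

/-- The Terwilliger algebra `T = T(x)`, generated by `A` and `A*`. -/
def TSetup.T (S : TSetup X) : Subalgebra ℂ (Matrix X X ℂ) :=
  Algebra.adjoin ℂ {S.A, S.Astar}

/-- A thin irreducible `T`-module `W` with endpoint `r`, dual endpoint `t` and diameter `d`,
where `E*_i W ≠ 0` iff `r ≤ i ≤ r + d` and `E_i W ≠ 0` iff `t ≤ i ≤ t + d`. -/
structure TMod (S : TSetup X) where
  W : Submodule ℂ (X → ℂ)
  hWinv : ∀ B ∈ S.T, ∀ w ∈ W, B *ᵥ w ∈ W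
  hWne : W ≠ ⊥
  hWirr : ∀ U : Submodule ℂ (X → ℂ), U ≤ W →
    (∀ B ∈ S.T, ∀ w ∈ U, B *ᵥ w ∈ U) → U = ⊥ ∨ U = W
  hthin : ∀ i : ℕ, Module.finrank ℂ (W.map (S.Estar i).mulVecLin) ≤ 1
  r : ℕ
  t : ℕ
  d : ℕ
  hr : ∀ i : ℕ, W.map (S.Estar i).mulVecLin ≠ ⊥ ↔ r ≤ i ∧ i ≤ r + d
  ht : ∀ i : ℕ, W.map (S.E i).mulVecLin ≠ ⊥ ↔ t ≤ i ∧ i ≤ t + d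

open Classical in
/-- The action of a matrix `B` on `W` (the restriction of `B` to `W`; defined to be `0`
if `B` does not leave `W` invariant). -/
def actW (S : TSetup X) (M : TMod S) (B : Matrix X X ℂ) : M.W →ₗ[ℂ] M.W :=
  if h : ∀ w ∈ M.W, B.mulVecLin w ∈ M.W then B.mulVecLin.restrict h else 0

/-- `tr_W(B)`: the trace of the action of `B` on `W`. -/
def trW (S : TSetup X) (M : TMod S) (B : Matrix X X ℂ) : ℂ :=
  LinearMap.trace ℂ M.W (actW S M B)

/-- `a_i(W) = tr_W(E*_{r+i} A)`. -/
def aW (S : TSetup X) (M : TMod S) (i : ℕ) : ℂ :=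
  trW S M (S.Estar (M.r + i) * S.A)

/-- `x_i(W) = tr_W(E*_{r+i} A E*_{r+i-1} A)`, with `x_0(W) = 0`. -/
def xW (S : TSetup X) (M : TMod S) (i : ℕ) : ℂ :=
  if i = 0 then 0 else trW S M (S.Estar (M.r + i) * S.A * S.Estar (M.r + i - 1) * S.A)

/-- `a*_i(W) = tr_W(E_{t+i} A*)`. -/
def astarW (S : TSetup X) (M : TMod S) (i : ℕ) : ℂ :=
  trW S M (S.E (M.t + i) * S.Astar)

/-- `x*_i(W) = tr_W(E_{t+i} A* E_{t+i-1} A*)`, with `x*_0(W) = 0`. -/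
def xstarW (S : TSetup X) (M : TMod S) (i : ℕ) : ℂ :=
  if i = 0 then 0 else trW S M (S.E (M.t + i) * S.Astar * S.E (M.t + i - 1) * S.Astar)

/-- The polynomials `p_i`: `p_0 = 1`, `p_{-1} = 0`,
`λ p_i = p_{i+1} + a_i(W) p_i + x_i(W) p_{i-1}`. -/
def pW (S : TSetup X) (M : TMod S) : ℕ → Polynomial ℂ
  | 0 => 1
  | 1 => Polynomial.X - Polynomial.C (aW S M 0)
  | (n + 2) =>
      (Polynomial.X - Polynomial.C (aW S M (n + 1))) * pW S M (n + 1)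
        - Polynomial.C (xW S M (n + 1)) * pW S M n

/-- The polynomials `p*_i`: `p*_0 = 1`, `p*_{-1} = 0`,
`λ p*_i = p*_{i+1} + a*_i(W) p*_i + x*_i(W) p*_{i-1}`. -/
def pstarW (S : TSetup X) (M : TMod S) : ℕ → Polynomial ℂ
  | 0 => 1
  | 1 => Polynomial.X - Polynomial.C (astarW S M 0)
  | (n + 2) =>
      (Polynomial.X - Polynomial.C (astarW S M (n + 1))) * pstarW S M (n + 1)
        - Polynomial.C (xstarW S M (n + 1)) * pstarW S M n

/-- The Hermitian inner product `⟨u,v⟩ = Σ_y u_y conj(v_y)` on `ℂ^X`. -/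
def herm (u v : X → ℂ) : ℂ := ∑ y, u y * (starRingEnd ℂ) (v y)

/-- `ν(W)`, the multiplicative inverse of `m_0(W) = tr_W(E_t E*_r)`. -/
def nuW (S : TSetup X) (M : TMod S) : ℂ :=
  (trW S M (S.E M.t * S.Estar M.r))⁻¹

/-- `k_i(W) = ν(W) m*_i(W)` where `m*_i(W) = tr_W(E*_{r+i} E_t)`. -/
def kW (S : TSetup X) (M : TMod S) (i : ℕ) : ℂ :=
  nuW S M * trW S M (S.Estar (M.r + i) * S.E M.t)

/-- `k*_i(W) = ν(W) m_i(W)` where `m_i(W) = tr_W(E_{t+i} E*_r)`. -/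
def kstarW (S : TSetup X) (M : TMod S) (i : ℕ) : ℂ :=
  nuW S M * trW S M (S.E (M.t + i) * S.Estar M.r)

/-!
The idempotents `E*_i` show that a thin module `W` of diameter `d` has dimension `d + 1`. In a
basis adapted to `E*_r W, ..., E*_{r+d} W` the matrix of `A` is tridiagonal, because adjacent
vertices have distances from `x` differing by at most one. Its diagonal entries are the `a_i(W)`,
and the products of opposite off-diagonal entries are the `x_i(W)`; expanding the determinant
along the last row shows that its characteristic polynomial obeys the recurrence defining
`p_{d+1}`. On the other hand `E_t, ..., E_{t+d}` act on `W` as nonzero idempotents with sum `1`,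
so `A` has the `d + 1` distinct eigenvalues `θ_t, ..., θ_{t+d}` on `W`, and its minimal and
characteristic polynomials are both `∏ (λ - θ_{t+i})`.

The dual argument exchanges the two families of idempotents and needs `E_i A* E_j = 0` for
`|i - j| > 1`. The squared Frobenius norm of this matrix is
`tr(E_i A* E_j A*) = |X|² uᵗ (E_i ∘ E_j) u`, where `u` is the column of `E_1` at `x`. Since `u`
is an eigenvector of `E_i ∘ E_j` with eigenvalue `|X|⁻¹ q^1_{ij}`, the norm vanishes with the
Krein parameter.
-/

/-! ### Tridiagonal matrices and three-term recurrences -/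

section Tridiagonal

open Polynomial

/-- A square matrix is tridiagonal if its entries away from the main diagonal and the two adjacent
diagonals vanish. -/
def IsTridiagonal {R : Type*} [Zero R] {n : ℕ} (M : Matrix (Fin n) (Fin n) R) : Prop :=
  ∀ i j : Fin n, (i : ℕ) + 1 < j ∨ (j : ℕ) + 1 < i → M i j = 0

theorem IsTridiagonal.submatrix_castSucc {R : Type*} [Zero R] {n : ℕ}
    {M : Matrix (Fin (n + 1)) (Fin (n + 1)) R} (hM : IsTridiagonal M) :
    IsTridiagonal (M.submatrix Fin.castSucc Fin.castSucc) :=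
  fun i j h => hM i.castSucc j.castSucc h

variable {R : Type*} [CommRing R]

/-- The sequence `p` of monic polynomials obeys the three-term recurrence
`λ p_i = p_{i+1} + a_i p_i + x_i p_{i-1}` with `p_0 = 1` and `p_{-1} = 0`. -/
structure IsThreeTermSequence (a x : ℕ → R) (p : ℕ → R[X]) : Prop where
  zero : p 0 = 1
  one : p 1 = Polynomial.X - C (a 0)
  add_two (n : ℕ) : p (n + 2) = (Polynomial.X - C (a (n + 1))) * p (n + 1) - C (x (n + 1)) * p n

theorem IsTridiagonal.charmatrix {n : ℕ} {M : Matrix (Fin n) (Fin n) R} (hM : IsTridiagonal M) :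
    IsTridiagonal M.charmatrix := fun i j h => by
  have hij : i ≠ j := by
    rintro rfl
    omega
  rw [charmatrix_apply_ne _ _ _ hij, hM i j h, C_0, neg_zero]

theorem charmatrix_submatrix_of_injective {m n : Type*} [Fintype m] [DecidableEq m] [Fintype n]
    [DecidableEq n] (M : Matrix n n R) {f : m → n} (hf : Function.Injective f) :
    (M.submatrix f f).charmatrix = M.charmatrix.submatrix f f := by
  ext1 i j
  simp [charmatrix_apply, diagonal_apply, hf.eq_iff]

theorem IsTridiagonal.det_submatrix_castSucc_succAbove {n : ℕ}
    {M : Matrix (Fin (n + 2)) (Fin (n + 2)) R} (hM : IsTridiagonal M) :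
    (M.submatrix Fin.castSucc (Fin.last n).castSucc.succAbove).det =
      M (Fin.last n).castSucc (Fin.last (n + 1)) *
        ((M.submatrix Fin.castSucc Fin.castSucc).submatrix Fin.castSucc Fin.castSucc).det := by
  have h_last : (Fin.last n).castSucc.succAbove (Fin.last n) = Fin.last (n + 1) := by
    rw [Fin.succAbove_of_le_castSucc _ _ le_rfl, Fin.succ_last]
  have h_castSucc (j : Fin n) : (Fin.last n).castSucc.succAbove j.castSucc = j.castSucc.castSucc :=
    Fin.succAbove_of_castSucc_lt _ _ (Fin.castSucc_lt_castSucc_iff.mpr j.castSucc_lt_last)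
  have h_minor : (M.submatrix Fin.castSucc (Fin.last n).castSucc.succAbove).submatrix
      (Fin.last n).succAbove (Fin.last n).succAbove =
        (M.submatrix Fin.castSucc Fin.castSucc).submatrix Fin.castSucc Fin.castSucc := by
    ext i j
    simp [h_castSucc]
  have h_zero (i : Fin n) : M i.castSucc.castSucc (Fin.last (n + 1)) = 0 :=
    hM _ _ (Or.inl (by simp))
  rw [det_succ_column _ (Fin.last n), Fin.sum_univ_castSucc, Finset.sum_eq_zero]
  · rw [h_minor]
    simp [h_last, ← two_mul]
  · intro i _
    simp [h_last, h_zero]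

theorem IsTridiagonal.det_succ_succ {n : ℕ} {M : Matrix (Fin (n + 2)) (Fin (n + 2)) R}
    (hM : IsTridiagonal M) :
    M.det = M (Fin.last _) (Fin.last _) * (M.submatrix Fin.castSucc Fin.castSucc).det -
      M (Fin.last _) (Fin.last n).castSucc * M (Fin.last n).castSucc (Fin.last _) *
        ((M.submatrix Fin.castSucc Fin.castSucc).submatrix Fin.castSucc Fin.castSucc).det := by
  have h_zero (j : Fin n) : M (Fin.last (n + 1)) j.castSucc.castSucc = 0 :=
    hM _ _ (Or.inr (by simp))
  have h_sign : (-1 : R) ^ (n + 1 + n) = -1 := Odd.neg_one_pow ⟨n, by ring⟩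
  have h_sign_last : (-1 : R) ^ (n + 1 + (n + 1)) = 1 := Even.neg_one_pow ⟨n + 1, rfl⟩
  rw [det_succ_row _ (Fin.last (n + 1)), Fin.sum_univ_castSucc, Fin.sum_univ_castSucc,
    Finset.sum_eq_zero fun j _ => by rw [h_zero j, mul_zero, zero_mul], zero_add]
  simp only [Fin.val_last, Fin.val_castSucc, Fin.succAbove_last, h_sign, h_sign_last,
    hM.det_submatrix_castSucc_succAbove]
  ring

theorem IsTridiagonal.charpoly_eq {a x : ℕ → R} {p : ℕ → R[X]} (hp : IsThreeTermSequence a x p) :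
    ∀ {n : ℕ} {M : Matrix (Fin n) (Fin n) R}, IsTridiagonal M → (∀ i : Fin n, a i = M i i) →
      (∀ i j : Fin n, (i : ℕ) + 1 = j → x j = M j i * M i j) → M.charpoly = p n
  | 0, M, _, _, _ => by rw [hp.zero, charpoly, det_fin_zero]
  | 1, M, _, ha, _ => by
    rw [hp.one, charpoly, det_fin_one, charmatrix_apply_eq, ← ha, Fin.val_zero]
  | n + 2, M, hM, ha, hx => by
    have h_submatrix {k : ℕ} (N : Matrix (Fin (k + 1)) (Fin (k + 1)) R) :
        (N.submatrix Fin.castSucc Fin.castSucc).charmatrix =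
          N.charmatrix.submatrix Fin.castSucc Fin.castSucc :=
      charmatrix_submatrix_of_injective N (Fin.castSucc_injective k)
    have h_one : (M.submatrix Fin.castSucc Fin.castSucc).charpoly = p (n + 1) :=
      charpoly_eq hp hM.submatrix_castSucc (fun i => ha i.castSucc)
        fun i j h => hx i.castSucc j.castSucc h
    have h_two : ((M.submatrix Fin.castSucc Fin.castSucc).submatrix
        Fin.castSucc Fin.castSucc).charpoly = p n :=
      charpoly_eq hp hM.submatrix_castSucc.submatrix_castSucc (fun i => ha i.castSucc.castSucc)
        fun i j h => hx i.castSucc.castSucc j.castSucc.castSucc h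
    have h_ne : Fin.last (n + 1) ≠ (Fin.last n).castSucc := (Fin.castSucc_lt_last _).ne'
    have h_diag : a (n + 1) = M (Fin.last _) (Fin.last _) := ha (Fin.last (n + 1))
    have h_offDiag : x (n + 1) =
        M (Fin.last _) (Fin.last n).castSucc * M (Fin.last n).castSucc (Fin.last _) :=
      hx (Fin.last n).castSucc (Fin.last (n + 1)) rfl
    rw [charpoly, h_submatrix] at h_one
    rw [charpoly, h_submatrix, h_submatrix] at h_two
    rw [hp.add_two, charpoly, hM.charmatrix.det_succ_succ, h_one, h_two, charmatrix_apply_eq,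
      charmatrix_apply_ne _ _ _ h_ne, charmatrix_apply_ne _ _ _ h_ne.symm, h_diag, h_offDiag, C_mul,
      neg_mul_neg]

end Tridiagonal

/-! ### Idempotents and eigenvalues -/

theorem completeOrthogonalIdempotents_comp {R I J : Type*} [Semiring R] [Fintype J] {e : I → R}
    (he : OrthogonalIdempotents e) {s : Finset I} (hs : ∑ i ∈ s, e i = 1) (f : J ↪ I)
    (hf : ∀ i, e i ≠ 0 → i ∈ Set.range f) : CompleteOrthogonalIdempotents (e ∘ f) where
  toOrthogonalIdempotents := he.embedding f
  complete := by
    set P := ∑ j, (e ∘ f) j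
    have hP_map : P = ∑ i ∈ Finset.univ.map f, e i := (Finset.sum_map _ _ _).symm
    have h_mul (i : I) : e i * P = e i := by
      by_cases hi : i ∈ Set.range f
      · rw [hP_map, he.mul_sum_of_mem (by simpa using hi)]
      · rw [not_imp_comm.mp (hf i) hi, zero_mul]
    calc P = (∑ i ∈ s, e i) * P := by rw [hs, one_mul]
      _ = ∑ i ∈ s, e i := by simp only [Finset.sum_mul, h_mul]
      _ = 1 := hs

theorem completeOrthogonalIdempotents_fin {R : Type*} [Semiring R] {e : ℕ → R}
    (he : OrthogonalIdempotents e) {s : Finset ℕ} (hs : ∑ i ∈ s, e i = 1) {m d : ℕ}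
    (hm : ∀ i, e i ≠ 0 → m ≤ i ∧ i ≤ m + d) :
    CompleteOrthogonalIdempotents fun i : Fin (d + 1) => e (m + i) :=
  completeOrthogonalIdempotents_comp he hs (Fin.valEmbedding.trans (addLeftEmbedding m))
    fun i hi => ⟨⟨i - m, by have := hm i hi; omega⟩, Nat.add_sub_of_le (hm i hi).1⟩

theorem sum_smul_mul_of_orthogonalIdempotents {R K I : Type*} [Semiring R] [CommSemiring K]
    [Algebra K R] {e : I → R} (he : OrthogonalIdempotents e) (c : I → K) {s : Finset I} {i : I}
    (hi : i ∈ s) : (∑ j ∈ s, c j • e j) * e i = c i • e i := by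
  simp [Finset.sum_mul, he.mul_eq, hi]

section Eigenvalues

open Polynomial

theorem aeval_mul_eq_eval_smul {K R : Type*} [CommSemiring K] [Semiring R] [Algebra K R] {b e : R}
    {c : K} (h : b * e = c • e) (p : K[X]) : aeval b p * e = p.eval c • e := by
  induction p using Polynomial.induction_on' with
  | add p q hp hq => simp only [map_add, add_mul, hp, hq, eval_add, add_smul]
  | monomial n a =>
    have h_pow : b ^ n * e = c ^ n • e := by
      induction n with
      | zero => simp
      | succ n ih => rw [pow_succ, mul_assoc, h, mul_smul_comm, ih, smul_smul, pow_succ']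
    rw [aeval_monomial, mul_assoc, h_pow, ← Algebra.smul_def, smul_smul, eval_monomial]

variable {K R I : Type*} [Field K] [Ring R] [Algebra K R]

theorem mem_adjoin_singleton_of_mul_eq_smul {b : R} {e : I → R} {c : I → K} {s : Finset I}
    (hs : ∑ i ∈ s, e i = 1) (h : ∀ i ∈ s, b * e i = c i • e i) (hc : Set.InjOn c s) {i : I}
    (hi : i ∈ s) : e i ∈ Algebra.adjoin K {b} := by
  have h_mul (j : I) (hj : j ∈ s) :
      aeval b (Lagrange.basis s c i) * e j = if j = i then e i else 0 := by
    rw [aeval_mul_eq_eval_smul (h j hj)]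
    split_ifs with hji
    · rw [hji, Lagrange.eval_basis_self hc hi, one_smul]
    · rw [Lagrange.eval_basis_of_ne (Ne.symm hji) hj, zero_smul]
  have h_aeval : aeval b (Lagrange.basis s c i) = e i := by
    rw [← mul_one (aeval b _), ← hs, Finset.mul_sum, Finset.sum_congr rfl h_mul,
      Finset.sum_ite_eq' s i, if_pos hi]
  exact h_aeval ▸ aeval_mem_adjoin_singleton K b

theorem minpoly_eq_prod_of_mul_eq_smul [Fintype I] {b : R} {e : I → R} {c : I → K}
    (hsum : ∑ i, e i = 1) (hne : ∀ i, e i ≠ 0) (h : ∀ i, b * e i = c i • e i)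
    (hc : Function.Injective c) : minpoly K b = ∏ i, (Polynomial.X - C (c i)) := by
  symm
  refine minpoly.unique K b (monic_prod_X_sub_C c _) ?_ fun q hq hbq => ?_
  · have h_root (i : I) : (∏ j, (Polynomial.X - C (c j))).eval (c i) = 0 := by
      rw [eval_prod, Finset.prod_eq_zero (Finset.mem_univ i) (by simp)]
    rw [← mul_one (aeval b _), ← hsum, Finset.mul_sum]
    exact Finset.sum_eq_zero fun i _ => by rw [aeval_mul_eq_eval_smul (h i), h_root, zero_smul]
  · refine degree_le_of_dvd (Finset.prod_dvd_of_coprime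
      ((pairwise_coprime_X_sub_C hc).set_pairwise _) fun i _ => dvd_iff_isRoot.mpr ?_) hq.ne_zero
    have h_smul : q.eval (c i) • e i = 0 := by
      rw [← aeval_mul_eq_eval_smul (h i), hbq, zero_mul]
    exact (smul_eq_zero.mp h_smul).resolve_right (hne i)

end Eigenvalues

/-! ### Endomorphisms that are tridiagonal with respect to orthogonal idempotents -/

section Endomorphisms

variable {K V I : Type*} [Field K] [AddCommGroup V] [Module K V]

theorem linearIndependent_of_orthogonalIdempotents {e : I → Module.End K V}
    (he : OrthogonalIdempotents e) {v : I → V} (hv : ∀ i, e i (v i) = v i) (hne : ∀ i, v i ≠ 0) :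
    LinearIndependent K v := by
  rw [linearIndependent_iff']
  intro s g hg i hi
  have h_apply (j : I) : e i (v j) = if i = j then v i else 0 := by
    rw [← hv j, ← Module.End.mul_apply, he.mul_eq]
    split_ifs with hij
    · rw [hij, hv j]
    · rfl
  have h_smul : g i • v i = 0 := by
    simpa [h_apply, hi] using congrArg (e i) hg
  exact (smul_eq_zero.mp h_smul).resolve_right (hne i)

variable [Fintype I]

theorem finrank_eq_sum_finrank_range [FiniteDimensional K V] [CharZero K]
    {e : I → Module.End K V} (he : CompleteOrthogonalIdempotents e) :
    Module.finrank K V = ∑ i, Module.finrank K (LinearMap.range (e i)) := by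
  have h_trace (i : I) :
      LinearMap.trace K V (e i) = (Module.finrank K (LinearMap.range (e i)) : K) :=
    (LinearMap.IsIdempotentElem.isProj_range _ (he.idem i)).trace
  have h_cast : (Module.finrank K V : K) = ∑ i, (Module.finrank K (LinearMap.range (e i)) : K) := by
    rw [← LinearMap.trace_one K V, ← he.complete, map_sum,
      Finset.sum_congr rfl fun i _ => h_trace i]
  exact_mod_cast h_cast

theorem exists_basis_toMatrix_eq_single [FiniteDimensional K V] [DecidableEq I]
    {e : I → Module.End K V}
    (he : OrthogonalIdempotents e) (hne : ∀ i, e i ≠ 0)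
    (hcard : Fintype.card I = Module.finrank K V) :
    ∃ b : Module.Basis I K V, ∀ i, LinearMap.toMatrix b b (e i) = Matrix.single i i 1 := by
  choose u hu using fun i => DFunLike.ne_iff.mp (hne i)
  have h_apply (i j : I) : e i (e j (u j)) = if i = j then e i (u i) else 0 := by
    rw [← Module.End.mul_apply, he.mul_eq]
    split_ifs with hij
    · rw [hij]
    · rfl
  have h_indep : LinearIndependent K fun i => e i (u i) :=
    linearIndependent_of_orthogonalIdempotents he (fun i => by rw [h_apply, if_pos rfl]) hu
  let b := Module.Basis.mk h_indep (h_indep.span_eq_top_of_card_eq_finrank' hcard).ge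
  have h_basis (i j : I) : e i (b j) = if i = j then b i else 0 := by
    rw [Module.Basis.mk_apply, Module.Basis.mk_apply, h_apply]
  refine ⟨b, fun i => ?_⟩
  ext k l
  rw [LinearMap.toMatrix_apply, h_basis]
  split_ifs with hil <;> simp [hil, Matrix.single_apply, Finsupp.single_apply]

theorem charpoly_eq_of_orthogonalIdempotents [FiniteDimensional K V] {n : ℕ}
    {e : Fin n → Module.End K V} (he : OrthogonalIdempotents e) (hne : ∀ i, e i ≠ 0)
    (hn : Module.finrank K V = n) {B : Module.End K V}
    (hB : ∀ i j : Fin n, (i : ℕ) + 1 < j ∨ (j : ℕ) + 1 < i → e i * B * e j = 0)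
    {a x : ℕ → K} {p : ℕ → Polynomial K} (hp : IsThreeTermSequence a x p)
    (ha : ∀ i : Fin n, a i = LinearMap.trace K V (e i * B))
    (hx : ∀ i j : Fin n, (i : ℕ) + 1 = j → x j = LinearMap.trace K V (e j * B * e i * B)) :
    B.charpoly = p n := by
  obtain ⟨b, hb⟩ := exists_basis_toMatrix_eq_single he hne (by rw [Fintype.card_fin, hn])
  set M := LinearMap.toMatrix b b B
  have h_entry (i j : Fin n) :
      LinearMap.toMatrix b b (e i * B * e j) = Matrix.single i j (M i j) := by
    rw [LinearMap.toMatrix_mul, LinearMap.toMatrix_mul, hb, hb, Matrix.single_mul_mul_single,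
      one_mul, mul_one]
  rw [← LinearMap.charpoly_toMatrix B b]
  refine IsTridiagonal.charpoly_eq hp (fun i j hij => ?_) (fun i => ?_) fun i j hij => ?_
  · simpa [hB i j hij] using (congrFun₂ (h_entry i j) i j).symm
  · rw [ha, LinearMap.trace_eq_matrix_trace K b, LinearMap.toMatrix_mul, hb,
      Matrix.trace_single_mul, one_smul]
  · rw [hx i j hij, LinearMap.trace_eq_matrix_trace K b, LinearMap.toMatrix_mul, h_entry,
      Matrix.trace_single_mul, smul_eq_mul]

theorem charpoly_eq_prod_of_mul_eq_smul [FiniteDimensional K V] {B : Module.End K V}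
    {e : I → Module.End K V} {c : I → K} (hcard : Fintype.card I = Module.finrank K V)
    (hsum : ∑ i, e i = 1) (hne : ∀ i, e i ≠ 0) (h : ∀ i, B * e i = c i • e i)
    (hc : Function.Injective c) : B.charpoly = ∏ i, (Polynomial.X - Polynomial.C (c i)) := by
  have h_minpoly := minpoly_eq_prod_of_mul_eq_smul hsum hne h hc
  have h_natDegree : B.charpoly.natDegree ≤ (minpoly K B).natDegree := by
    rw [B.charpoly_natDegree, h_minpoly, Polynomial.natDegree_finsetProd_X_sub_C_eq_card,
      Finset.card_univ, hcard]
  rw [← h_minpoly]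
  exact Polynomial.eq_of_monic_of_dvd_of_natDegree_le
    (minpoly.monic (Algebra.IsIntegral.isIntegral B)) B.charpoly_monic B.minpoly_dvd_charpoly
    h_natDegree

end Endomorphisms
/-! ### The vanishing of triple products -/

section TripleProduct

variable {n : Type*} [Fintype n]

theorem trace_mul_diagonal_mul_diagonal {R : Type*} [CommSemiring R] [DecidableEq n]
    (M N : Matrix n n R) (u : n → R) :
    (M * diagonal u * (N * diagonal u)).trace = u ⬝ᵥ (Mᵀ ⊙ N) *ᵥ u := by
  rw [dotProduct_mulVec, dotProduct_vecMul_hadamard, ← trace_transpose, Matrix.trace_mul_comm]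
  simp [Matrix.mul_assoc]

theorem mul_mul_eq_zero_of_trace_eq_zero {R : Type*} [CommRing R] [PartialOrder R] [StarRing R]
    [StarOrderedRing R] [NoZeroDivisors R] {P Q H : Matrix n n R} (hP : P.IsHermitian)
    (hQ : Q.IsHermitian) (hH : H.IsHermitian) (hPP : IsIdempotentElem P) (hQQ : IsIdempotentElem Q)
    (h : (P * H * (Q * H)).trace = 0) : P * H * Q = 0 := by
  rw [← trace_mul_conjTranspose_self_eq_zero_iff, conjTranspose_mul, conjTranspose_mul, hP.eq,
    hQ.eq, hH.eq]
  calc (P * H * Q * (Q * (H * P))).trace = (P * H * (Q * Q) * H * P).trace := by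
        simp only [Matrix.mul_assoc]
    _ = (P * P * H * (Q * Q * H)).trace := by
        rw [Matrix.trace_mul_comm]
        simp only [Matrix.mul_assoc]
    _ = 0 := by rw [hPP.eq, hQQ.eq, h]

end TripleProduct

/-! ### The graph and its Terwilliger algebra -/

namespace TSetup

variable (S : TSetup X)

theorem orthogonalIdempotents_E : OrthogonalIdempotents S.E := by
  refine OrthogonalIdempotents.iff_mul_eq.mpr fun i j => ?_
  by_cases hi : i ≤ S.D
  · by_cases hj : j ≤ S.D
    · exact S.hEidem i j hi hj
    · rw [S.hEzero j (not_le.mp hj), mul_zero, if_neg (by omega)]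
  · rw [S.hEzero i (not_le.mp hi), zero_mul, ite_self]

theorem isHermitian_E (i : ℕ) : (S.E i).IsHermitian := by
  rw [Matrix.IsHermitian, conjTranspose, S.hEsymm]
  exact S.hEreal i

theorem Estar_eq_diagonal (i : ℕ) :
    S.Estar i = diagonal fun y => if S.G.dist S.x y = i then 1 else 0 := by
  ext y z
  by_cases hi : i ≤ S.D
  · rw [S.hEstar i hi, diagonal_apply, ite_and]
  · have h_dist : S.G.dist S.x y ≠ i := by
      have := S.hDiamLe S.x y
      omega
    rw [S.hEstarzero i (not_le.mp hi), Matrix.zero_apply, diagonal_apply, if_neg h_dist, ite_self]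

theorem orthogonalIdempotents_Estar : OrthogonalIdempotents S.Estar := by
  refine OrthogonalIdempotents.iff_mul_eq.mpr fun i j => ?_
  simp only [Estar_eq_diagonal, diagonal_mul_diagonal]
  split_ifs with hij
  · simp [hij]
  · rw [← diagonal_zero, diagonal_eq_diagonal_iff]
    grind

theorem sum_Estar : ∑ i ∈ Finset.range (S.D + 1), S.Estar i = 1 := by
  ext y z
  have h_mem : S.G.dist S.x y < S.D + 1 := Nat.lt_succ_of_le (S.hDiamLe S.x y)
  simp [Estar_eq_diagonal, Matrix.sum_apply, diagonal_apply, one_apply, h_mem]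

theorem A_mul_E (i : ℕ) : S.A * S.E i = (S.θ i : ℂ) • S.E i := by
  by_cases hi : i ≤ S.D
  · rw [S.hAspec]
    exact sum_smul_mul_of_orthogonalIdempotents S.orthogonalIdempotents_E (fun j => (S.θ j : ℂ))
      (Finset.mem_range_succ_iff.mpr hi)
  · rw [S.hEzero i (not_le.mp hi), mul_zero, smul_zero]

theorem Astar_mul_Estar (i : ℕ) : S.Astar * S.Estar i = (S.θstar i : ℂ) • S.Estar i := by
  by_cases hi : i ≤ S.D
  · rw [S.hAstarspec]
    exact sum_smul_mul_of_orthogonalIdempotents S.orthogonalIdempotents_Estar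
      (fun j => (S.θstar j : ℂ)) (Finset.mem_range_succ_iff.mpr hi)
  · rw [S.hEstarzero i (not_le.mp hi), mul_zero, smul_zero]

theorem Estar_mul_A_mul_Estar_eq_zero {i j : ℕ} (h : i + 1 < j ∨ j + 1 < i) :
    S.Estar i * S.A * S.Estar j = 0 := by
  ext y z
  rw [Estar_eq_diagonal, Estar_eq_diagonal, mul_diagonal, diagonal_mul, S.hA, Matrix.zero_apply]
  by_cases hadj : S.G.Adj y z
  · have h_dist : ¬(S.G.dist S.x y = i ∧ S.G.dist S.x z = j) := by
      have := hadj.diff_dist_adj (u := S.x)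
      omega
    grind
  · rw [if_neg hadj, mul_zero, zero_mul]

theorem Astar_eq_diagonal :
    S.Astar = diagonal ((Fintype.card X : ℂ) • (S.E 1).col S.x) := by
  ext y z
  rw [S.hAstar, diagonal_apply, Pi.smul_apply, smul_eq_mul, col_apply, ← S.hEsymm, transpose_apply,
    S.hEsymm]

theorem isHermitian_Astar : S.Astar.IsHermitian := by
  rw [Astar_eq_diagonal, isHermitian_diagonal_iff]
  intro y
  have h_real : (starRingEnd ℂ) (S.E 1 y S.x) = S.E 1 y S.x := congrFun₂ (S.hEreal 1) y S.x
  simp [isSelfAdjoint_iff, h_real]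

theorem hadamard_E_mulVec_col {i j : ℕ} (hi : i ≤ S.D) (hj : j ≤ S.D) :
    (S.E i ⊙ S.E j) *ᵥ (S.E 1).col S.x =
      ((Fintype.card X : ℂ)⁻¹ * S.q 1 i j) • (S.E 1).col S.x := by
  have h_one : 1 ∈ Finset.range (S.D + 1) :=
    Finset.mem_range_succ_iff.mpr (le_trans (by norm_num) S.hD3)
  have h_col (P Q : Matrix X X ℂ) : P *ᵥ Q.col S.x = (P * Q).col S.x := rfl
  rw [h_col, S.hKrein i j hi hj, smul_mul_assoc, sum_smul_mul_of_orthogonalIdempotents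
    S.orthogonalIdempotents_E (fun h => (S.q h i j : ℂ)) h_one, smul_smul]
  rfl

open scoped ComplexOrder in
theorem E_mul_Astar_mul_E_eq_zero {i j : ℕ} (h : i + 1 < j ∨ j + 1 < i) :
    S.E i * S.Astar * S.E j = 0 := by
  by_cases hi : i ≤ S.D
  swap
  · rw [S.hEzero i (not_le.mp hi), zero_mul, zero_mul]
  by_cases hj : j ≤ S.D
  swap
  · rw [S.hEzero j (not_le.mp hj), mul_zero]
  have h_krein : S.q 1 i j = 0 :=
    S.hQpoly0 1 i j (le_trans (by norm_num) S.hD3) hi hj (by omega)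
  refine mul_mul_eq_zero_of_trace_eq_zero (S.isHermitian_E i) (S.isHermitian_E j)
    S.isHermitian_Astar (S.orthogonalIdempotents_E.idem i) (S.orthogonalIdempotents_E.idem j) ?_
  rw [Astar_eq_diagonal, trace_mul_diagonal_mul_diagonal, S.hEsymm, mulVec_smul,
    S.hadamard_E_mulVec_col hi hj, h_krein]
  simp

/-- The adjacency matrix `A` as an element of the Terwilliger algebra. -/
def adjT : S.T := ⟨S.A, Algebra.subset_adjoin (by simp)⟩

/-- The dual adjacency matrix `A*` as an element of the Terwilliger algebra. -/
def dualAdjT : S.T := ⟨S.Astar, Algebra.subset_adjoin (by simp)⟩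

theorem injOn_θ : Set.InjOn (fun i => (S.θ i : ℂ)) (Finset.range (S.D + 1)) := by
  intro i hi j hj hij
  rw [Finset.mem_coe, Finset.mem_range_succ_iff] at hi hj
  exact S.hθinj i j hi hj (Complex.ofReal_injective hij)

theorem E_mem_T (i : ℕ) : S.E i ∈ S.T := by
  by_cases hi : i ≤ S.D
  · exact Algebra.adjoin_mono (by simp) (mem_adjoin_singleton_of_mul_eq_smul S.hEsum
      (fun j _ => S.A_mul_E j) S.injOn_θ (Finset.mem_range_succ_iff.mpr hi))
  · rw [S.hEzero i (not_le.mp hi)]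
    exact zero_mem _

theorem injOn_θstar : Set.InjOn (fun i => (S.θstar i : ℂ)) (Finset.range (S.D + 1)) := by
  intro i hi j hj hij
  rw [Finset.mem_coe, Finset.mem_range_succ_iff] at hi hj
  exact S.hθstarinj i j hi hj (Complex.ofReal_injective hij)

theorem Estar_mem_T (i : ℕ) : S.Estar i ∈ S.T := by
  by_cases hi : i ≤ S.D
  · exact Algebra.adjoin_mono (by simp) (mem_adjoin_singleton_of_mul_eq_smul S.sum_Estar
      (fun j _ => S.Astar_mul_Estar j) S.injOn_θstar (Finset.mem_range_succ_iff.mpr hi))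
  · rw [S.hEstarzero i (not_le.mp hi)]
    exact zero_mem _

/-- The primitive idempotent `E_i` as an element of the Terwilliger algebra. -/
def idemT (i : ℕ) : S.T := ⟨S.E i, S.E_mem_T i⟩

/-- The dual primitive idempotent `E*_i` as an element of the Terwilliger algebra. -/
def dualIdemT (i : ℕ) : S.T := ⟨S.Estar i, S.Estar_mem_T i⟩

theorem orthogonalIdempotents_idemT : OrthogonalIdempotents S.idemT :=
  (OrthogonalIdempotents.map_injective_iff S.T.val.toRingHom Subtype.val_injective).mp
    S.orthogonalIdempotents_E

theorem orthogonalIdempotents_dualIdemT : OrthogonalIdempotents S.dualIdemT :=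
  (OrthogonalIdempotents.map_injective_iff S.T.val.toRingHom Subtype.val_injective).mp
    S.orthogonalIdempotents_Estar

theorem sum_idemT : ∑ i ∈ Finset.range (S.D + 1), S.idemT i = 1 :=
  Subtype.ext (by rw [AddSubmonoidClass.coe_finsetSum]; exact S.hEsum)

theorem sum_dualIdemT : ∑ i ∈ Finset.range (S.D + 1), S.dualIdemT i = 1 :=
  Subtype.ext (by rw [AddSubmonoidClass.coe_finsetSum]; exact S.sum_Estar)

end TSetup

/-! ### The action on a thin irreducible module -/

namespace TMod

variable {S : TSetup X} (M : TMod S)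

/-- The representation of the Terwilliger algebra on the module `W`. -/
def action : S.T →ₐ[ℂ] Module.End ℂ M.W where
  toFun B := (B : Matrix X X ℂ).mulVecLin.restrict (M.hWinv B B.2)
  map_one' := LinearMap.ext fun w => Subtype.ext (one_mulVec (w : X → ℂ))
  map_mul' B C := LinearMap.ext fun w => Subtype.ext
    (mulVec_mulVec (w : X → ℂ) (B : Matrix X X ℂ) (C : Matrix X X ℂ)).symm
  map_zero' := LinearMap.ext fun w => Subtype.ext (zero_mulVec (w : X → ℂ))
  map_add' B C := LinearMap.ext fun w => Subtype.ext
    (add_mulVec (B : Matrix X X ℂ) (C : Matrix X X ℂ) (w : X → ℂ))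
  commutes' c := LinearMap.ext fun w => Subtype.ext (by simp [Algebra.algebraMap_eq_smul_one])

theorem actW_coe (B : S.T) : actW S M B = M.action B :=
  dif_pos (M.hWinv B B.2)

theorem trW_coe (B : S.T) : trW S M B = LinearMap.trace ℂ M.W (M.action B) := by
  rw [trW, actW_coe]

theorem map_subtype_range_action (B : S.T) :
    (LinearMap.range (M.action B)).map M.W.subtype = M.W.map (B : Matrix X X ℂ).mulVecLin := by
  rw [← LinearMap.range_domRestrict M.W]
  exact (LinearMap.range_comp (M.action B) M.W.subtype).symm

theorem finrank_range_action (B : S.T) :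
    Module.finrank ℂ (LinearMap.range (M.action B)) =
      Module.finrank ℂ (M.W.map (B : Matrix X X ℂ).mulVecLin) := by
  rw [← map_subtype_range_action, Submodule.finrank_map_subtype_eq]

theorem action_ne_zero_iff (B : S.T) :
    M.action B ≠ 0 ↔ M.W.map (B : Matrix X X ℂ).mulVecLin ≠ ⊥ := by
  rw [← map_subtype_range_action, Ne, Ne,
    (Submodule.map_injective_of_injective M.W.subtype_injective).eq_iff' (Submodule.map_bot _),
    LinearMap.range_eq_bot]

/-- The restrictions to `W` of the primitive idempotents `E_t, ..., E_{t+d}`. -/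
def idem (i : Fin (M.d + 1)) : Module.End ℂ M.W := M.action (S.idemT (M.t + i))

/-- The restrictions to `W` of the dual primitive idempotents `E*_r, ..., E*_{r+d}`. -/
def dualIdem (i : Fin (M.d + 1)) : Module.End ℂ M.W := M.action (S.dualIdemT (M.r + i))

theorem action_idemT_ne_zero_iff (i : ℕ) :
    M.action (S.idemT i) ≠ 0 ↔ M.t ≤ i ∧ i ≤ M.t + M.d :=
  (M.action_ne_zero_iff _).trans (M.ht i)

theorem action_dualIdemT_ne_zero_iff (i : ℕ) :
    M.action (S.dualIdemT i) ≠ 0 ↔ M.r ≤ i ∧ i ≤ M.r + M.d :=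
  (M.action_ne_zero_iff _).trans (M.hr i)

theorem idem_ne_zero (i : Fin (M.d + 1)) : M.idem i ≠ 0 :=
  (M.action_idemT_ne_zero_iff _).mpr (by omega)

theorem dualIdem_ne_zero (i : Fin (M.d + 1)) : M.dualIdem i ≠ 0 :=
  (M.action_dualIdemT_ne_zero_iff _).mpr (by omega)

theorem completeOrthogonalIdempotents_idem : CompleteOrthogonalIdempotents M.idem :=
  completeOrthogonalIdempotents_fin (e := M.action ∘ S.idemT)
    (S.orthogonalIdempotents_idemT.map (M.action : S.T →+* Module.End ℂ M.W))
    ((map_sum M.action _ _).symm.trans (by rw [S.sum_idemT, map_one]))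
    fun i => (M.action_idemT_ne_zero_iff i).mp

theorem completeOrthogonalIdempotents_dualIdem : CompleteOrthogonalIdempotents M.dualIdem :=
  completeOrthogonalIdempotents_fin (e := M.action ∘ S.dualIdemT)
    (S.orthogonalIdempotents_dualIdemT.map (M.action : S.T →+* Module.End ℂ M.W))
    ((map_sum M.action _ _).symm.trans (by rw [S.sum_dualIdemT, map_one]))
    fun i => (M.action_dualIdemT_ne_zero_iff i).mp

theorem finrank_range_dualIdem (i : Fin (M.d + 1)) :
    Module.finrank ℂ (LinearMap.range (M.dualIdem i)) = 1 := by
  refine le_antisymm ((M.finrank_range_action _).trans_le (M.hthin _)) ?_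
  rw [Submodule.one_le_finrank_iff, Ne, LinearMap.range_eq_bot]
  exact M.dualIdem_ne_zero i

theorem finrank_eq : Module.finrank ℂ M.W = M.d + 1 := by
  simp [finrank_eq_sum_finrank_range M.completeOrthogonalIdempotents_dualIdem,
    finrank_range_dualIdem]

theorem t_add_d_le : M.t + M.d ≤ S.D := by
  by_contra! h
  have h_ne := (M.ht (M.t + M.d)).mpr (by omega)
  simp [S.hEzero _ h] at h_ne

theorem r_add_d_le : M.r + M.d ≤ S.D := by
  by_contra! h
  have h_ne := (M.hr (M.r + M.d)).mpr (by omega)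
  simp [S.hEstarzero _ h] at h_ne

theorem θ_injective : Function.Injective fun i : Fin (M.d + 1) => (S.θ (M.t + i) : ℂ) := by
  have h_mem (i : Fin (M.d + 1)) : M.t + (i : ℕ) ∈ Finset.range (S.D + 1) := by
    have := M.t_add_d_le
    exact Finset.mem_range.mpr (by omega)
  exact fun i j hij => Fin.ext (Nat.add_left_cancel (S.injOn_θ (h_mem i) (h_mem j) hij))

theorem θstar_injective :
    Function.Injective fun i : Fin (M.d + 1) => (S.θstar (M.r + i) : ℂ) := by
  have h_mem (i : Fin (M.d + 1)) : M.r + (i : ℕ) ∈ Finset.range (S.D + 1) := by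
    have := M.r_add_d_le
    exact Finset.mem_range.mpr (by omega)
  exact fun i j hij => Fin.ext (Nat.add_left_cancel (S.injOn_θstar (h_mem i) (h_mem j) hij))

theorem action_adjT_mul_idem (i : Fin (M.d + 1)) :
    M.action S.adjT * M.idem i = (S.θ (M.t + i) : ℂ) • M.idem i := by
  rw [idem, ← map_mul, ← map_smul]
  exact congrArg M.action (Subtype.ext (S.A_mul_E _))

theorem action_dualAdjT_mul_dualIdem (i : Fin (M.d + 1)) :
    M.action S.dualAdjT * M.dualIdem i = (S.θstar (M.r + i) : ℂ) • M.dualIdem i := by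
  rw [dualIdem, ← map_mul, ← map_smul]
  exact congrArg M.action (Subtype.ext (S.Astar_mul_Estar _))

theorem dualIdem_mul_action_adjT_mul_dualIdem_eq_zero {i j : Fin (M.d + 1)}
    (h : (i : ℕ) + 1 < j ∨ (j : ℕ) + 1 < i) :
    M.dualIdem i * M.action S.adjT * M.dualIdem j = 0 := by
  rw [dualIdem, dualIdem, ← map_mul, ← map_mul, ← map_zero M.action]
  exact congrArg M.action (Subtype.ext (S.Estar_mul_A_mul_Estar_eq_zero (by omega)))

theorem idem_mul_action_dualAdjT_mul_idem_eq_zero {i j : Fin (M.d + 1)}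
    (h : (i : ℕ) + 1 < j ∨ (j : ℕ) + 1 < i) :
    M.idem i * M.action S.dualAdjT * M.idem j = 0 := by
  rw [idem, idem, ← map_mul, ← map_mul, ← map_zero M.action]
  exact congrArg M.action (Subtype.ext (S.E_mul_Astar_mul_E_eq_zero (by omega)))

theorem isThreeTermSequence_pW : IsThreeTermSequence (aW S M) (xW S M) (pW S M) :=
  ⟨rfl, rfl, fun _ => rfl⟩

theorem isThreeTermSequence_pstarW :
    IsThreeTermSequence (astarW S M) (xstarW S M) (pstarW S M) :=
  ⟨rfl, rfl, fun _ => rfl⟩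

theorem aW_eq_trace (i : Fin (M.d + 1)) :
    aW S M i = LinearMap.trace ℂ M.W (M.dualIdem i * M.action S.adjT) := by
  rw [dualIdem, ← map_mul, ← trW_coe]
  rfl

theorem astarW_eq_trace (i : Fin (M.d + 1)) :
    astarW S M i = LinearMap.trace ℂ M.W (M.idem i * M.action S.dualAdjT) := by
  rw [idem, ← map_mul, ← trW_coe]
  rfl

theorem xW_eq_trace {i j : Fin (M.d + 1)} (h : (i : ℕ) + 1 = j) :
    xW S M j = LinearMap.trace ℂ M.W
      (M.dualIdem j * M.action S.adjT * M.dualIdem i * M.action S.adjT) := by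
  have h_pred : M.r + (j : ℕ) - 1 = M.r + i := by omega
  rw [xW, if_neg (by omega), h_pred, dualIdem, dualIdem, ← map_mul, ← map_mul, ← map_mul,
    ← trW_coe]
  rfl

theorem xstarW_eq_trace {i j : Fin (M.d + 1)} (h : (i : ℕ) + 1 = j) :
    xstarW S M j = LinearMap.trace ℂ M.W
      (M.idem j * M.action S.dualAdjT * M.idem i * M.action S.dualAdjT) := by
  have h_pred : M.t + (j : ℕ) - 1 = M.t + i := by omega
  rw [xstarW, if_neg (by omega), h_pred, idem, idem, ← map_mul, ← map_mul, ← map_mul, ← trW_coe]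
  rfl

theorem charpoly_A_eq_pW : LinearMap.charpoly (actW S M S.A) = pW S M (M.d + 1) :=
  (congrArg LinearMap.charpoly (M.actW_coe S.adjT)).trans <|
    charpoly_eq_of_orthogonalIdempotents
      M.completeOrthogonalIdempotents_dualIdem.toOrthogonalIdempotents M.dualIdem_ne_zero
      M.finrank_eq (fun _ _ => M.dualIdem_mul_action_adjT_mul_dualIdem_eq_zero)
      M.isThreeTermSequence_pW M.aW_eq_trace fun _ _ => M.xW_eq_trace

theorem charpoly_Astar_eq_pstarW :
    LinearMap.charpoly (actW S M S.Astar) = pstarW S M (M.d + 1) :=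
  (congrArg LinearMap.charpoly (M.actW_coe S.dualAdjT)).trans <|
    charpoly_eq_of_orthogonalIdempotents
      M.completeOrthogonalIdempotents_idem.toOrthogonalIdempotents M.idem_ne_zero
      M.finrank_eq (fun _ _ => M.idem_mul_action_dualAdjT_mul_idem_eq_zero)
      M.isThreeTermSequence_pstarW M.astarW_eq_trace fun _ _ => M.xstarW_eq_trace

theorem minpoly_A_eq_prod : minpoly ℂ (actW S M S.A : Module.End ℂ M.W) =
    ∏ i ∈ Finset.range (M.d + 1), (Polynomial.X - Polynomial.C (S.θ (M.t + i) : ℂ)) := by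
  rw [Finset.prod_range]
  exact (congrArg (minpoly ℂ) (M.actW_coe S.adjT)).trans <|
    minpoly_eq_prod_of_mul_eq_smul M.completeOrthogonalIdempotents_idem.complete M.idem_ne_zero
      M.action_adjT_mul_idem M.θ_injective

theorem minpoly_Astar_eq_prod : minpoly ℂ (actW S M S.Astar : Module.End ℂ M.W) =
    ∏ i ∈ Finset.range (M.d + 1), (Polynomial.X - Polynomial.C (S.θstar (M.r + i) : ℂ)) := by
  rw [Finset.prod_range]
  exact (congrArg (minpoly ℂ) (M.actW_coe S.dualAdjT)).trans <|
    minpoly_eq_prod_of_mul_eq_smul M.completeOrthogonalIdempotents_dualIdem.complete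
      M.dualIdem_ne_zero M.action_dualAdjT_mul_dualIdem M.θstar_injective

theorem charpoly_A_eq_prod : LinearMap.charpoly (actW S M S.A) =
    ∏ i ∈ Finset.range (M.d + 1), (Polynomial.X - Polynomial.C (S.θ (M.t + i) : ℂ)) := by
  rw [Finset.prod_range]
  exact (congrArg LinearMap.charpoly (M.actW_coe S.adjT)).trans <|
    charpoly_eq_prod_of_mul_eq_smul (by rw [Fintype.card_fin, finrank_eq])
      M.completeOrthogonalIdempotents_idem.complete M.idem_ne_zero M.action_adjT_mul_idem
      M.θ_injective

theorem charpoly_Astar_eq_prod : LinearMap.charpoly (actW S M S.Astar) =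
    ∏ i ∈ Finset.range (M.d + 1), (Polynomial.X - Polynomial.C (S.θstar (M.r + i) : ℂ)) := by
  rw [Finset.prod_range]
  exact (congrArg LinearMap.charpoly (M.actW_coe S.dualAdjT)).trans <|
    charpoly_eq_prod_of_mul_eq_smul (by rw [Fintype.card_fin, finrank_eq])
      M.completeOrthogonalIdempotents_dualIdem.complete M.dualIdem_ne_zero
      M.action_dualAdjT_mul_dualIdem M.θstar_injective

end TMod

/-- `p_{d+1} = ∏_{i=0}^d (λ - θ_{t+i})` is both the minimal and the characteristic
polynomial of the restriction of `A` to `W`; dually for `p*_{d+1}` and `A*`. -/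
theorem stmt7 (S : TSetup X) (M : TMod S) (hd : 0 < M.d) :
    (pW S M (M.d + 1) =
      ∏ i ∈ Finset.range (M.d + 1), (Polynomial.X - Polynomial.C ((S.θ (M.t + i) : ℂ)))) ∧
    minpoly ℂ (actW S M S.A : Module.End ℂ M.W) = pW S M (M.d + 1) ∧
    LinearMap.charpoly (actW S M S.A) = pW S M (M.d + 1) ∧
    (pstarW S M (M.d + 1) =
      ∏ i ∈ Finset.range (M.d + 1), (Polynomial.X - Polynomial.C ((S.θstar (M.r + i) : ℂ)))) ∧
    minpoly ℂ (actW S M S.Astar : Module.End ℂ M.W) = pstarW S M (M.d + 1) ∧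
    LinearMap.charpoly (actW S M S.Astar) = pstarW S M (M.d + 1) :=
  ⟨M.charpoly_A_eq_pW.symm.trans M.charpoly_A_eq_prod,
    M.minpoly_A_eq_prod.trans (M.charpoly_A_eq_prod.symm.trans M.charpoly_A_eq_pW),
    M.charpoly_A_eq_pW,
    M.charpoly_Astar_eq_pstarW.symm.trans M.charpoly_Astar_eq_prod,
    M.minpoly_Astar_eq_prod.trans (M.charpoly_Astar_eq_prod.symm.trans M.charpoly_Astar_eq_pstarW),
    M.charpoly_Astar_eq_pstarW⟩
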